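/- arXiv:nlin/0207047 — 3 statements merged into one kernel-verified Lean document; each statement's English description precedes it below -/
import Mathlib

section
/- Let n ≥ 2 and let f : {0,1}^n → {0,1} be a local rule of width n. If f is both (2n−3)-conservative and (2n−2)-conservative, then f is L-conservative for every integer L > 0. -/
/-- A local rule `f` of width `n` is `L`-conservative if for every `L`-periodic
bisequence `x : ℤ → Fin 2`, the sum of `f` applied to the `n`-blocks starting at
positions `1,…,L` equals the sum of `x` over positions `1,…,L`. -/
def LCons (n : ℕ) (f : (Fin n → Fin 2) → Fin 2) (L : ℕ) : Prop :=
  ∀ x : ℤ → Fin 2, (∀ i : ℤ, x (i + L) = x i) →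
    (∑ i ∈ Finset.range L, (f (fun k => x ((i : ℤ) + 1 + (k : ℕ)))).val) =
      ∑ i ∈ Finset.range L, (x ((i : ℤ) + 1)).val

/-!
Put `m = n - 1`. A word `uv` with `|u| = |v| = m`, repeated periodically, has period `2n - 2`. Let
`E(u, v)` be the sum of `f(x_i, …, x_{i+n-1}) - x_i` over the `m` windows that start in `u` and end
in `v`; conservation at period `2n - 2` says `E(u, v) = -E(v, u)`. The `i`-th of these windows sees
only the letters of `u` from position `i` on and those of `v` up to position `i`. So `u_j` and `v_k`
can interact in `E(u, v)` only if `k ≤ j`, and by antisymmetry only if `j ≤ k`. The remaining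
interaction, of `u_k` with `v_k`, is antisymmetric in two binary letters and hence vanishes too.
Therefore `E(u, v) = E(u, 0) - E(v, 0)`, and summing this identity over all positions of one period
of an arbitrary periodic bisequence gives the theorem.
-/

open Finset

section Truncate

variable {α : Type*} [Zero α]

/-- The first `k` letters of the word `u`, followed by zeros. -/
def truncate (k : ℕ) (u : ℕ → α) (j : ℕ) : α :=
  if j < k then u j else 0

lemma truncate_zero (u : ℕ → α) : truncate 0 u = 0 :=
  rfl

lemma truncate_eqOn_Iio (k : ℕ) (u : ℕ → α) : Set.EqOn (truncate k u) u (Set.Iio k) :=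
  fun _ hj => if_pos hj

lemma truncate_eqOn_Ici (k : ℕ) (u : ℕ → α) : Set.EqOn (truncate k u) 0 (Set.Ici k) :=
  fun _ hj => if_neg (not_lt.2 hj)

lemma truncate_succ_eqOn_Iio (k : ℕ) (u : ℕ → α) :
    Set.EqOn (truncate (k + 1) u) (truncate k u) (Set.Iio k) :=
  ((truncate_eqOn_Iio (k + 1) u).mono (Set.Iio_subset_Iio k.le_succ)).trans
    (truncate_eqOn_Iio k u).symm

lemma truncate_succ_eqOn_Ici {k : ℕ} {u v : ℕ → α} (h : u k = v k) :
    Set.EqOn (truncate (k + 1) u) (truncate (k + 1) v) (Set.Ici k) := by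
  intro j (hj : k ≤ j)
  grind [truncate]

lemma truncate_succ_of_eq_zero {k : ℕ} {u : ℕ → α} (h : u k = 0) :
    truncate (k + 1) u = truncate k u := by
  funext j
  grind [truncate]

end Truncate

section Decoupling

variable {M : Type*} [AddCommGroup M]

/-- A function `E` of two words `u`, `v` decouples at cuts if the letters of `u` to the left of a
cut do not interact in `E u v` with the letters of `v` to its right: the effect on `E` of changing
the latter does not depend on the former. -/
def DecouplesAtCuts {α : Type*} (E : (ℕ → α) → (ℕ → α) → M) : Prop :=
  ∀ ⦃k u u' v v'⦄, Set.EqOn u u' (Set.Ici k) → Set.EqOn v v' (Set.Iio k) →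
    E u v - E u v' = E u' v - E u' v'

namespace DecouplesAtCuts

lemma sub_eq_sub_of_antisymm {α : Type*} {E : (ℕ → α) → (ℕ → α) → M} (hE : DecouplesAtCuts E)
    (hanti : ∀ u v, E u v = -E v u) {k : ℕ} {u u' v v' : ℕ → α}
    (hu : Set.EqOn u u' (Set.Iio k)) (hv : Set.EqOn v v' (Set.Ici k)) :
    E u v - E u v' = E u' v - E u' v' := by
  have := hE hv hu
  grind

variable [IsAddTorsionFree M] {E : (ℕ → Fin 2) → (ℕ → Fin 2) → M}

lemma truncate_succ_sub (hE : DecouplesAtCuts E) (hanti : ∀ u v, E u v = -E v u)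
    (k : ℕ) (u v : ℕ → Fin 2) :
    E (truncate (k + 1) u) (truncate (k + 1) v) - E (truncate (k + 1) u) (truncate k v) =
      E (truncate k u) (truncate (k + 1) v) - E (truncate k u) (truncate k v) := by
  by_cases hu : u k = 0
  · rw [truncate_succ_of_eq_zero hu]
  by_cases hv : v k = 0
  · rw [truncate_succ_of_eq_zero hv, sub_self, sub_self]
  have huv : v k = u k := by omega
  have hself (w) : E w w = 0 := self_eq_neg.1 (hanti w w)
  -- As `u k = v k`, both words `v` may be replaced by the words `u`, where `E` is alternating.
  have hsucc := hE.sub_eq_sub_of_antisymm hanti (truncate_succ_eqOn_Iio k u)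
    (truncate_succ_eqOn_Ici huv)
  have hbase := hE.sub_eq_sub_of_antisymm hanti (truncate_succ_eqOn_Iio k u)
    ((truncate_eqOn_Ici k v).trans (truncate_eqOn_Ici k u).symm)
  have hswap := hanti (truncate (k + 1) u) (truncate k u)
  rw [hself] at hsucc hbase
  grind

lemma truncate_eq_sub (hE : DecouplesAtCuts E) (hanti : ∀ u v, E u v = -E v u)
    (k : ℕ) (u v : ℕ → Fin 2) :
    E (truncate k u) (truncate k v) = E (truncate k u) 0 - E (truncate k v) 0 := by
  induction k with
  | zero => rw [truncate_zero, truncate_zero, sub_self, self_eq_neg.1 (hanti 0 0)]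
  | succ k ih =>
    have hdiag := hE.truncate_succ_sub hanti k u v
    have hleft := hE.sub_eq_sub_of_antisymm hanti (truncate_succ_eqOn_Iio k u)
      (truncate_eqOn_Ici k v)
    have hright := hE (truncate_eqOn_Ici k u) (truncate_succ_eqOn_Iio k v)
    rw [hanti 0, hanti 0] at hright
    grind

end DecouplesAtCuts

end Decoupling

section Alternate

variable {α : Type*} {m : ℕ}

/-- The `2m`-periodic bisequence `…uvuv…` in which blocks of `m` letters of `u` and of `v`
alternate, a block of `u` starting at position `0`. -/
def alternate (m : ℕ) (u v : ℕ → α) (j : ℤ) : α :=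
  if Even (j / m) then u (j % m).toNat else v (j % m).toNat

lemma alternate_natCast_of_lt (u v : ℕ → α) {j : ℕ} (hj : j < m) : alternate m u v j = u j := by
  rw [alternate, ← Int.natCast_ediv, ← Int.natCast_mod, Nat.div_eq_of_lt hj, Nat.mod_eq_of_lt hj]
  simp

lemma alternate_add_self (hm : m ≠ 0) (u v : ℕ → α) (j : ℤ) :
    alternate m u v (j + m) = alternate m v u j := by
  have hdiv : (j + m) / (m : ℤ) = j / m + 1 := by
    rw [Int.add_ediv_of_dvd_right (dvd_refl _), Int.ediv_self (mod_cast hm)]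
  simp only [alternate, hdiv, Int.add_emod_right, Int.even_add_one, ite_not]

lemma alternate_natCast_add (u v : ℕ → α) {j : ℕ} (hj : j < m) :
    alternate m u v (j + m : ℕ) = v j := by
  rw [Nat.cast_add, alternate_add_self (by omega), alternate_natCast_of_lt v u hj]

lemma alternate_periodic (hm : m ≠ 0) (u v : ℕ → α) :
    Function.Periodic (alternate m u v) (2 * m : ℕ) := by
  intro j
  rw [two_mul, Nat.cast_add, ← add_assoc, alternate_add_self hm, alternate_add_self hm]

end Alternate

section SlidingBlockCode

variable {α M : Type*} {n : ℕ}

/-- The sliding block code with block map `φ`: its value at `i` is `φ` of the window of `x` of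
width `n` that starts at `i`. -/
def slidingBlockCode (φ : (Fin n → α) → M) (x : ℤ → α) (i : ℤ) : M :=
  φ fun k => x (i + (k : ℕ))

lemma slidingBlockCode_congr (φ : (Fin n → α) → M) {x y : ℤ → α} {i j : ℤ}
    (h : ∀ k < n, x (i + k) = y (j + k)) : slidingBlockCode φ x i = slidingBlockCode φ y j :=
  congrArg φ (funext fun k => h k k.2)

lemma slidingBlockCode_periodic (φ : (Fin n → α) → M) {x : ℤ → α} {c : ℤ}
    (hx : Function.Periodic x c) : Function.Periodic (slidingBlockCode φ x) c :=
  fun i => slidingBlockCode_congr φ fun k _ => by rw [add_right_comm, hx]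

variable [AddCommGroup M]

/-- The sliding block code of `φ` sums to zero over one period of every `L`-periodic bisequence. -/
def SumsToZero (φ : (Fin n → α) → M) (L : ℕ) : Prop :=
  ∀ x : ℤ → α, Function.Periodic x L → ∑ i ∈ range L, slidingBlockCode φ x i = 0

end SlidingBlockCode

lemma sum_range_add_of_periodic {M : Type*} [AddCommGroup M] {h : ℤ → M} {L : ℕ}
    (hh : Function.Periodic h L) (c : ℕ) :
    ∑ i ∈ range L, h (i + c) = ∑ i ∈ range L, h i := by
  induction c with
  | zero => simp only [Nat.cast_zero, add_zero]
  | succ c ih =>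
    have hrotate := (sum_range_succ' (fun i : ℕ => h (i + c)) L).symm.trans (sum_range_succ _ L)
    have hends : h (L + c) = h ((0 : ℕ) + c) := by
      rw [add_comm, hh, Nat.cast_zero, zero_add]
    rw [hends, add_left_inj, ih] at hrotate
    rw [← hrotate]
    exact sum_congr rfl fun i _ => congrArg h (by push_cast; ring)

section CrossSum

variable {α M : Type*} {m : ℕ}

lemma slidingBlockCode_alternate_congr (φ : (Fin (m + 1) → α) → M) {u u' v v' : ℕ → α} {i : ℕ}
    (hi : i < m) (hu : Set.EqOn u u' (Set.Ico i m)) (hv : Set.EqOn v v' (Set.Iic i)) :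
    slidingBlockCode φ (alternate m u v) i = slidingBlockCode φ (alternate m u' v') i := by
  refine slidingBlockCode_congr φ fun k hk => ?_
  rw [← Nat.cast_add]
  obtain hlt | hle := lt_or_ge (i + k) m
  · rw [alternate_natCast_of_lt u v hlt, alternate_natCast_of_lt u' v' hlt, hu ⟨by omega, hlt⟩]
  · obtain ⟨j, hj⟩ := Nat.exists_eq_add_of_le' hle
    rw [hj, alternate_natCast_add u v (by omega), alternate_natCast_add u' v' (by omega),
      hv (show j ≤ i by omega)]

variable [AddCommGroup M]

/-- For a block map of width `m + 1` and words `u`, `v` of length `m`, the sum over all windows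
of the concatenation `uv` that start in `u`; the last such window ends at the last letter of `v`. -/
def crossSum (φ : (Fin (m + 1) → α) → M) (u v : ℕ → α) : M :=
  ∑ i ∈ range m, slidingBlockCode φ (alternate m u v) i

lemma crossSum_decouplesAtCuts (φ : (Fin (m + 1) → α) → M) : DecouplesAtCuts (crossSum φ) := by
  intro k u u' v v' hu hv
  simp only [crossSum, ← sum_sub_distrib]
  refine sum_congr rfl fun i hi => ?_
  rw [mem_range] at hi
  obtain hik | hki := lt_or_ge i k
  · have hv' : Set.EqOn v v' (Set.Iic i) := hv.mono (Set.Iic_subset_Iio.2 hik)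
    rw [slidingBlockCode_alternate_congr φ hi (Set.eqOn_refl u _) hv',
      slidingBlockCode_alternate_congr φ hi (Set.eqOn_refl u' _) hv', sub_self, sub_self]
  · have hu' : Set.EqOn u u' (Set.Ico i m) := hu.mono fun j hj => hki.trans hj.1
    rw [slidingBlockCode_alternate_congr φ hi hu' (Set.eqOn_refl v _),
      slidingBlockCode_alternate_congr φ hi hu' (Set.eqOn_refl v' _)]

lemma crossSum_congr (φ : (Fin (m + 1) → α) → M) {u u' v v' : ℕ → α}
    (hu : Set.EqOn u u' (Set.Iio m)) (hv : Set.EqOn v v' (Set.Iio m)) :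
    crossSum φ u v = crossSum φ u' v' :=
  sum_congr rfl fun _ hi => slidingBlockCode_alternate_congr φ (mem_range.1 hi)
    (hu.mono fun _ hj => hj.2) (hv.mono (Set.Iic_subset_Iio.2 (mem_range.1 hi)))

lemma crossSum_eq_sum_slidingBlockCode (φ : (Fin (m + 1) → α) → M) (x : ℤ → α) (i : ℤ) :
    crossSum φ (fun k => x (i + k)) (fun k => x (i + m + k)) =
      ∑ j ∈ range m, slidingBlockCode φ x (i + j) := by
  refine sum_congr rfl fun j hj => slidingBlockCode_congr φ fun k hk => ?_
  rw [mem_range] at hj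
  rw [← Nat.cast_add]
  obtain hlt | hle := lt_or_ge (j + k) m
  · rw [alternate_natCast_of_lt _ _ hlt, Nat.cast_add, add_assoc]
  · obtain ⟨l, hl⟩ := Nat.exists_eq_add_of_le' hle
    rw [hl, alternate_natCast_add _ _ (by omega)]
    congr 1
    omega

lemma SumsToZero.crossSum_antisymm {φ : (Fin (m + 1) → α) → M} (hφ : SumsToZero φ (2 * m))
    (hm : m ≠ 0) (u v : ℕ → α) : crossSum φ u v = -crossSum φ v u := by
  have hsum := hφ _ (alternate_periodic hm u v)
  rw [two_mul, Finset.sum_range_add] at hsum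
  rw [eq_neg_iff_add_eq_zero, ← hsum]
  refine congrArg _ (sum_congr rfl fun i _ => slidingBlockCode_congr φ fun k _ => ?_)
  rw [← alternate_add_self hm]
  congr 1
  push_cast
  ring

variable [IsAddTorsionFree M] {φ : (Fin (m + 1) → Fin 2) → M}

lemma SumsToZero.crossSum_eq_sub (hφ : SumsToZero φ (2 * m)) (hm : m ≠ 0) (u v : ℕ → Fin 2) :
    crossSum φ u v = crossSum φ u 0 - crossSum φ v 0 := by
  have hu := (truncate_eqOn_Iio m u).symm
  have hv := (truncate_eqOn_Iio m v).symm
  rw [crossSum_congr φ hu hv, crossSum_congr φ hu (Set.eqOn_refl 0 _),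
    crossSum_congr φ hv (Set.eqOn_refl 0 _)]
  exact (crossSum_decouplesAtCuts φ).truncate_eq_sub (hφ.crossSum_antisymm hm) m u v

theorem SumsToZero.of_two_mul (hφ : SumsToZero φ (2 * m)) (hm : m ≠ 0) (L : ℕ) :
    SumsToZero φ L := by
  intro x hx
  let g (i : ℤ) : M := crossSum φ (fun k => x (i + k)) 0
  have hg : Function.Periodic g L := fun i =>
    congrArg (crossSum φ · 0) (funext fun k => hx.add_const k i)
  have hflow (i : ℤ) : ∑ j ∈ range m, slidingBlockCode φ x (i + j) = g i - g (i + m) := by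
    rw [← crossSum_eq_sum_slidingBlockCode, hφ.crossSum_eq_sub hm]
  have hsmul : m • ∑ i ∈ range L, slidingBlockCode φ x i = 0 := calc
    _ = ∑ j ∈ range m, ∑ i ∈ range L, slidingBlockCode φ x (i + j) := by
      simp only [sum_range_add_of_periodic (slidingBlockCode_periodic φ hx), sum_const, card_range]
    _ = ∑ i ∈ range L, (g i - g (i + m)) := by
      rw [sum_comm]
      exact sum_congr rfl fun i _ => hflow i
    _ = 0 := by
      rw [sum_sub_distrib, sum_range_add_of_periodic hg, sub_self]
  exact (nsmul_eq_zero_iff_right hm).1 hsmul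

end CrossSum

/-- The local change of mass under the rule `f`, as a block map: the output letter minus the first
letter of the window. -/
def defect {m : ℕ} (f : (Fin (m + 1) → Fin 2) → Fin 2) (w : Fin (m + 1) → Fin 2) : ℤ :=
  (f w).val - (w 0).val

lemma lCons_iff_sumsToZero_defect {m : ℕ} {f : (Fin (m + 1) → Fin 2) → Fin 2} {L : ℕ} :
    LCons (m + 1) f L ↔ SumsToZero (defect f) L := by
  have hshift (x : ℤ → Fin 2) :
      (∑ i ∈ range L, (f fun k => x ((i : ℤ) + 1 + (k : ℕ))).val =
        ∑ i ∈ range L, (x ((i : ℤ) + 1)).val) ↔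
      ∑ i ∈ range L, slidingBlockCode (defect f) (fun j => x (j + 1)) i = 0 := by
    simp only [slidingBlockCode, defect, sum_sub_distrib, sub_eq_zero, add_right_comm _ _ (1 : ℤ),
      Fin.val_zero, Nat.cast_zero, add_zero]
    norm_cast
  constructor
  · intro h x hx
    simpa only [add_sub_cancel_right] using
      (hshift fun j => x (j - 1)).1 (h (fun j => x (j - 1)) (Function.Periodic.sub_const hx 1))
  · intro h x hx
    exact (hshift x).2 (h _ (Function.Periodic.add_const hx 1))

theorem stmt_2_general (n : ℕ) (hn : 2 ≤ n) (f : (Fin n → Fin 2) → Fin 2)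
    (h : LCons n f (2 * n - 2)) (L : ℕ) : LCons n f L := by
  obtain ⟨m, rfl⟩ := Nat.exists_eq_add_of_le' (Nat.one_le_of_lt hn)
  rw [Nat.mul_succ, Nat.add_sub_cancel, lCons_iff_sumsToZero_defect] at h
  exact lCons_iff_sumsToZero_defect.2 (h.of_two_mul (by omega) L)

/-- If a local rule of width `n ≥ 2` is both `(2n-3)`- and `(2n-2)`-conservative,
then it is `L`-conservative for every `L > 0`. -/
theorem stmt_2 (n : ℕ) (hn : 2 ≤ n) (f : (Fin n → Fin 2) → Fin 2)
    (h1 : LCons n f (2 * n - 3)) (h2 : LCons n f (2 * n - 2)) :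
    ∀ L : ℕ, 0 < L → LCons n f L :=
  fun L _ => stmt_2_general n hn f h2 L
end

section
/- Let n ≥ 1 and let f : {0,1}^n → {0,1} be a conservative local rule of width n. If y : ℤ → ℤ ∪ {•} is an increasing labeling bisequence (i.e. y = ψ(s) for some strictly increasing s : ℤ → ℤ), then the bisequence f̂_∞(y) defined by f̂_∞(y)_i = f̂(y_i, y_{i+1}, …, y_{i+n−1}) is also an increasing labeling bisequence. -/
/-- `‖k‖ = 1` if `k ∈ ℤ`, and `‖k‖ = 0` if `k = •` (here `• = none`). -/
def normO (k : Option ℤ) : Fin 2 := k.elim 0 (fun _ => 1)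

/-- `G(x₁,…,xₙ) = ∑_{k=1}^{n} f(0,…,0,‖x₁‖,…,‖x_k‖)`, the `k`-th summand having
`n-k` leading zeros followed by `‖x₁‖,…,‖x_k‖`. -/
def Ghat (n : ℕ) (f : (Fin n → Fin 2) → Fin 2) (x : Fin n → Option ℤ) : ℕ :=
  ∑ k : Fin n,
    (f (fun j : Fin n =>
      if h : (j : ℕ) + (k : ℕ) + 1 < n then 0
      else normO (x ⟨(j : ℕ) + (k : ℕ) + 1 - n, by
        have := j.isLt; have := k.isLt; omega⟩))).val

open Classical in
/-- The rule `f̂` on labeled sites corresponding to `f`: if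
`f(‖x₁‖,…,‖xₙ‖) = 1` then `f̂(x₁,…,xₙ) = x_l` where `l` is the least index with
`‖x₁‖ + ⋯ + ‖x_l‖ = G(x₁,…,xₙ)`, and `f̂(x₁,…,xₙ) = •` otherwise. -/
noncomputable def fhat (n : ℕ) (f : (Fin n → Fin 2) → Fin 2)
    (x : Fin n → Option ℤ) : Option ℤ :=
  if f (fun j => normO (x j)) = 1 then
    if h : ∃ i : ℕ, i < n ∧
        (∑ j : Fin n, if (j : ℕ) ≤ i then (normO (x j)).val else 0) = Ghat n f x
    then x ⟨Nat.find h, (Nat.find_spec h).1⟩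
    else none
  else none

/-- `y : ℤ → Option ℤ` is an increasing labeling bisequence if `y = ψ(s)` for some
strictly increasing `s : ℤ → ℤ`, i.e. `y i = some j ↔ s j = i` (and `y i = none`
when `i` is not in the range of `s`). -/
def IsLabeling (y : ℤ → Option ℤ) : Prop :=
  ∃ s : ℤ → ℤ, StrictMono s ∧ ∀ i j : ℤ, (y i = some j ↔ s j = i)

/-!
Empty all sites of `y` to the left of position `i`. Then `G(y_i, …, y_{i+n-1})` is the number of
particles in the image of this configuration at positions at most `i`. Since the rule conserves the
number of particles, moving the cut from `i` to `i + 1` gives the balance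
`G_i + f_{i+1} = ‖y_i‖ + G_{i+1}`.

If `c j` is the label of the last particle of `y` at or to the left of `j`, the balance says that
`c (i - 1) + G_i` increases by one exactly at the occupied sites of the image. The label that `f̂`
selects at such a site `i` is the `G_i`-th one after `c (i - 1)`, so it equals this number, and the
labels in the image are therefore again consecutive.
-/

section Adjoints

variable {α : Type*} [LinearOrder α]

lemma exists_upperAdjoint_of_unbounded {l : ℤ → α} (hl : Monotone l)
    (habove : ¬BddAbove (Set.range l)) (hbelow : ¬BddBelow (Set.range l)) :
    ∃ u : α → ℤ, GaloisConnection l u := by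
  simp only [not_bddAbove_iff, not_bddBelow_iff, Set.exists_range_iff] at habove hbelow
  have hgreatest (a : α) : ∃ j, l j ≤ a ∧ ∀ k, l k ≤ a → k ≤ j := by
    obtain ⟨b, hb⟩ := habove a
    obtain ⟨j, hj⟩ := hbelow a
    exact Int.exists_greatest_of_bdd
      ⟨b, fun k hk => (hl.reflect_lt (hk.trans_lt hb)).le⟩ ⟨j, hj.le⟩
  choose u hu hmax using hgreatest
  exact ⟨u, fun j a => ⟨hmax a j, fun hj => (hl hj).trans (hu a)⟩⟩

lemma exists_lowerAdjoint_of_unbounded {u : ℤ → α} (hu : Monotone u)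
    (habove : ¬BddAbove (Set.range u)) (hbelow : ¬BddBelow (Set.range u)) :
    ∃ l : α → ℤ, GaloisConnection l u := by
  simp only [not_bddAbove_iff, not_bddBelow_iff, Set.exists_range_iff] at habove hbelow
  have hleast (a : α) : ∃ j, a ≤ u j ∧ ∀ k, a ≤ u k → j ≤ k := by
    obtain ⟨b, hb⟩ := hbelow a
    obtain ⟨j, hj⟩ := habove a
    exact Int.exists_least_of_bdd
      ⟨b, fun k hk => (hu.reflect_lt (hb.trans_le hk)).le⟩ ⟨j, hj.le⟩
  choose l hl hmin using hleast
  exact ⟨l, fun a j => ⟨fun hj => (hl a).trans (hu hj), hmin a j⟩⟩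

end Adjoints

section PartialSums

variable {g : ℕ → ℕ} {t : ℕ}

lemma exists_sum_range_succ_eq (hg : ∀ k, g k ≤ 1) (ht : 0 < t) {n : ℕ}
    (htn : t ≤ ∑ k ∈ Finset.range n, g k) :
    ∃ l < n, ∑ k ∈ Finset.range (l + 1), g k = t := by
  induction n with
  | zero => simp only [Finset.range_zero, Finset.sum_empty] at htn; omega
  | succ n ih =>
    by_cases hlt : t ≤ ∑ k ∈ Finset.range n, g k
    · obtain ⟨l, hl, hsum⟩ := ih hlt
      exact ⟨l, by omega, hsum⟩
    · have := hg n
      have := Finset.sum_range_succ g n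
      exact ⟨n, by omega, by omega⟩

lemma ne_zero_of_sum_range_succ_eq (ht : 0 < t) {l : ℕ}
    (hl : ∑ k ∈ Finset.range (l + 1), g k = t)
    (hmin : ∀ m < l, ∑ k ∈ Finset.range (m + 1), g k ≠ t) : g l ≠ 0 := by
  intro hzero
  rw [Finset.sum_range_succ, hzero, add_zero] at hl
  cases l with
  | zero => simp only [Finset.range_zero, Finset.sum_empty] at hl; omega
  | succ l => exact hmin l l.lt_succ_self hl

end PartialSums

@[simp] lemma normO_none : normO none = 0 := rfl

@[simp] lemma normO_some (j : ℤ) : normO (some j) = 1 := rfl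

section LabelCount

/-- `c` counts the labels of `y`: it is unbounded in both directions, increases by one exactly at
the occupied sites, and `c i` is the label of the last occupied site at or to the left of `i`. -/
structure IsLabelCount (y : ℤ → Option ℤ) (c : ℤ → ℤ) : Prop where
  step : ∀ i, c i = c (i - 1) + (normO (y i)).val
  label : ∀ i, normO (y i) = 1 → y i = some (c i)
  not_bddAbove : ¬BddAbove (Set.range c)
  not_bddBelow : ¬BddBelow (Set.range c)

variable {y : ℤ → Option ℤ} {c : ℤ → ℤ}

lemma IsLabeling.exists_isLabelCount (hy : IsLabeling y) : ∃ c, IsLabelCount y c := by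
  obtain ⟨s, hs, hsy⟩ := hy
  obtain ⟨c, hsc⟩ := exists_upperAdjoint_of_unbounded hs.monotone
    hs.not_bddAbove_range_of_isSuccArchimedean hs.not_bddBelow_range_of_isPredArchimedean
  have hcs (j : ℤ) : c (s j) = j :=
    le_antisymm (hs.le_iff_le.mp (hsc.l_u_le (s j))) (hsc.le_u_l j)
  have hrange : Set.range c = Set.univ := (Function.RightInverse.surjective hcs).range_eq
  refine ⟨c, ?step, ?label, ?_, ?_⟩
  case step =>
    intro i
    cases hi : y i with
    | none =>
      have hne : s (c i) ≠ i := fun h => by simp [(hsy i (c i)).mpr h] at hi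
      have hle : c i ≤ c (i - 1) := (hsc _ _).mp (by have := hsc.l_u_le i; omega)
      have hge : c (i - 1) ≤ c i := hsc.monotone_u (by omega)
      simp [le_antisymm hle hge]
    | some j =>
      obtain rfl : s j = i := (hsy i j).mp hi
      have hprev : j - 1 ≤ c (s j - 1) := (hsc _ _).mp (by have := hs (sub_one_lt j); omega)
      have hlt : c (s j - 1) < j := hsc.lt_iff_lt.mp (by omega)
      rw [hcs, normO_some, Fin.val_one]
      omega
  case label =>
    intro i hi
    cases hyi : y i with
    | none => simp [hyi] at hi
    | some j => rw [← (hsy i j).mp hyi, hcs]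
  all_goals simp [hrange]

namespace IsLabelCount

lemma monotone (hc : IsLabelCount y c) : Monotone c :=
  monotone_int_of_le_succ fun i => by
    have := hc.step (i + 1)
    rw [add_sub_cancel_right] at this
    omega

lemma eq_add_sum (hc : IsLabelCount y c) (i : ℤ) (l : ℕ) :
    c (i + l) = c (i - 1) + (∑ k ∈ Finset.range (l + 1), (normO (y (i + k))).val : ℕ) := by
  induction l with
  | zero => simpa using hc.step i
  | succ l ih =>
    have hstep := hc.step (i + (l + 1 : ℕ))
    rw [show i + ((l + 1 : ℕ) : ℤ) - 1 = i + l by push_cast; ring, ih] at hstep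
    rw [hstep, Finset.sum_range_succ _ (l + 1)]
    push_cast
    ring

lemma isLabeling (hc : IsLabelCount y c) : IsLabeling y := by
  obtain ⟨s, hsc⟩ := exists_lowerAdjoint_of_unbounded hc.monotone hc.not_bddAbove hc.not_bddBelow
  have hbound (j : ℤ) : j ≤ c (s j) ∧ c (s j - 1) < j :=
    ⟨hsc.le_u_l j, hsc.lt_iff_lt.mp (by omega)⟩
  have hcs (j : ℤ) : c (s j) = j := by
    have := hc.step (s j)
    have := hbound j
    omega
  have hlabel (j : ℤ) : y (s j) = some j := by
    have hocc : normO (y (s j)) = 1 := Fin.ext <| by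
      have := hc.step (s j)
      have := hbound j
      have := Fin.val_one 2
      omega
    rw [hc.label _ hocc, hcs]
  refine ⟨s, strictMono_int_of_lt_succ fun j => ?_, fun i j => ⟨fun hi => ?_, ?_⟩⟩
  · exact hsc.lt_iff_lt.mpr (by rw [hcs]; omega)
  · have hci : c i = j := by
      have := hc.label i (by simp [hi])
      simpa [hi] using this.symm
    have hstep := hc.step i
    rw [hi, normO_some, Fin.val_one] at hstep
    have hle : s j ≤ i := (hsc _ _).mpr hci.ge
    have hlt : i - 1 < s j := hsc.lt_iff_lt.mpr (by omega)
    omega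
  · rintro rfl
    exact hlabel j

end IsLabelCount

end LabelCount

section Conservation

/-- The block of length `n` of the bisequence `x` that starts at position `i`. -/
def window {α : Type*} (n : ℕ) (x : ℤ → α) (i : ℤ) : Fin n → α := fun k => x (i + (k : ℕ))

lemma window_congr {α : Type*} {n : ℕ} {x x' : ℤ → α} {i : ℤ}
    (h : ∀ k, i ≤ k → k < i + n → x k = x' k) : window n x i = window n x' i :=
  funext fun k => h _ (by omega) (by omega)

/-- A conservative local rule, that is, one which is `L`-conservative for every positive `L`. -/
def IsConservative {n : ℕ} (f : (Fin n → Fin 2) → Fin 2) : Prop :=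
  ∀ L : ℕ, 0 < L → LCons n f L

variable {n : ℕ} {f : (Fin n → Fin 2) → Fin 2}

-- The sites `a + 1, …, a + n - 1` are empty and separate the copies of `x` in its `L`-periodic
-- extension, so that no window meets two of them.
lemma IsConservative.sum_window_eq (hf : IsConservative f) {x : ℤ → Fin 2} {a : ℤ} {L : ℕ}
    (hx : ∀ k, x k ≠ 0 → a + n ≤ k ∧ k ≤ a + L) :
    ∑ i ∈ Finset.range L, (f (window n x (a + 1 + i))).val =
      ∑ i ∈ Finset.range L, (x (a + 1 + i)).val := by
  rcases Nat.eq_zero_or_pos L with rfl | hL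
  · simp
  have hzero (k : ℤ) (hk : k < a + n ∨ a + L < k) : x k = 0 := by
    by_contra hne
    have := hx k hne
    omega
  let z : ℤ → Fin 2 := fun k => x (a + 1 + (k - 1) % L)
  have hperiodic (i : ℤ) : z (i + L) = z i := by
    simp only [z, add_sub_right_comm, Int.add_emod_right]
  have hz (i k : ℕ) (hi : i < L) (hk : k < n ∨ k = 0) : z (i + 1 + k) = x (a + 1 + i + k) := by
    have hcast : (i : ℤ) + 1 + k - 1 = i + k := by ring
    simp only [z, hcast, add_assoc a, add_assoc (1 : ℤ)]
    rcases lt_or_ge (i + k) L with hlt | hge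
    · rw [Int.emod_eq_of_lt (by omega) (by omega)]
    · have hmod : ((i : ℤ) + k) % L ≤ i + k - L := by
        have hle := Nat.mod_le (i + k - L) L
        rw [← Nat.mod_eq_sub_mod hge] at hle
        zify [hge] at hle
        exact hle
      rw [hzero _ (by omega), hzero _ (by omega)]
  calc ∑ i ∈ Finset.range L, (f (window n x (a + 1 + i))).val
      = ∑ i ∈ Finset.range L, (f (fun k => z (i + 1 + (k : ℕ)))).val :=
        Finset.sum_congr rfl fun i hi => congrArg (fun b => (f b).val) <|
          funext fun k => (hz i k (Finset.mem_range.mp hi) (.inl k.isLt)).symm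
    _ = ∑ i ∈ Finset.range L, (z (i + 1)).val := hf L hL z hperiodic
    _ = ∑ i ∈ Finset.range L, (x (a + 1 + i)).val :=
        Finset.sum_congr rfl fun i hi => by
          simpa using congrArg Fin.val (hz i 0 (Finset.mem_range.mp hi) (.inr rfl))

variable {y : ℤ → Option ℤ}

lemma Ghat_window_eq_sum (f : (Fin n → Fin 2) → Fin 2) (y : ℤ → Option ℤ) (i : ℤ) :
    Ghat n f (window n y i) = ∑ k ∈ Finset.range n,
      (f (window n (fun j => normO (if i ≤ j then y j else none)) (i - n + 1 + k))).val := by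
  rw [← Fin.sum_univ_eq_sum_range (fun k : ℕ => (f (window n
    (fun j => normO (if i ≤ j then y j else none)) (i - n + 1 + k))).val)]
  refine Finset.sum_congr rfl fun k _ => congrArg (fun b => (f b).val) (funext fun j => ?_)
  by_cases hjk : (j : ℕ) + k + 1 < n
  · simp only [window, dif_pos hjk, if_neg (show ¬i ≤ i - n + 1 + (k : ℕ) + (j : ℕ) by omega),
      normO_none]
  · have hpos : i + ((j + k + 1 - n : ℕ) : ℤ) = i - n + 1 + (k : ℕ) + (j : ℕ) := by omega
    simp only [window, dif_neg hjk, hpos, if_pos (show i ≤ i - n + 1 + (k : ℕ) + (j : ℕ) by omega)]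

lemma Ghat_le (f : (Fin n → Fin 2) → Fin 2) (x : Fin n → Option ℤ) : Ghat n f x ≤ n :=
  calc Ghat n f x ≤ ∑ _k : Fin n, 1 := Finset.sum_le_sum fun _ _ => Fin.is_le _
    _ = n := by simp

lemma Ghat_pos (hn : 1 ≤ n) {x : Fin n → Option ℤ} (hx : f (fun j => normO (x j)) = 1) :
    0 < Ghat n f x := by
  refine Finset.sum_pos' (fun _ _ => Nat.zero_le _) ⟨⟨n - 1, by omega⟩, Finset.mem_univ _, ?_⟩
  have hlast (j : Fin n) : (j : ℕ) + (n - 1) + 1 - n = j := by omega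
  have hnlt (j : Fin n) : ¬(j : ℕ) + (n - 1) + 1 < n := by omega
  simp [hlast, hnlt, hx]

namespace IsConservative

lemma Ghat_window_add_sum (hf : IsConservative f) (hn : 1 ≤ n) {i : ℤ} {m : ℕ}
    (hy : ∀ k, i + m < k → y k = none) :
    Ghat n f (window n y i) +
        ∑ k ∈ Finset.range m, (f (window n (fun j => normO (y j)) (i + 1 + k))).val =
      ∑ k ∈ Finset.range (m + 1), (normO (y (i + k))).val := by
  let x : ℤ → Fin 2 := fun j => normO (if i ≤ j then y j else none)
  have hleft (k : ℤ) (hk : k < i) : x k = 0 := by simp [x, hk.not_ge]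
  have hright (k : ℤ) (hk : i ≤ k) : x k = normO (y k) := by simp [x, hk]
  have hsupp (k : ℤ) (hk : x k ≠ 0) : i - n + n ≤ k ∧ k ≤ i - n + (n + m : ℕ) := by
    have hik : i ≤ k := by
      by_contra hlt
      exact hk (hleft k (not_le.mp hlt))
    have hkm : k ≤ i + m := by
      by_contra hlt
      exact hk (by rw [hright k hik, hy k (not_le.mp hlt), normO_none])
    omega
  calc Ghat n f (window n y i) +
        ∑ k ∈ Finset.range m, (f (window n (fun j => normO (y j)) (i + 1 + k))).val
      = ∑ k ∈ Finset.range (n + m), (f (window n x (i - n + 1 + k))).val := by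
        rw [Finset.sum_range_add, Ghat_window_eq_sum]
        refine congrArg _ (Finset.sum_congr rfl fun k _ => congrArg (fun b => (f b).val) ?_)
        rw [show i - n + 1 + ((n + k : ℕ) : ℤ) = i + 1 + k by push_cast; ring]
        exact window_congr fun j hj _ => (hright j (by omega)).symm
    _ = ∑ k ∈ Finset.range (n + m), (x (i - n + 1 + k)).val := hf.sum_window_eq hsupp
    _ = ∑ k ∈ Finset.range (m + 1), (normO (y (i + k))).val := by
        rw [show n + m = n - 1 + (m + 1) by omega, Finset.sum_range_add,
          Finset.sum_eq_zero, zero_add]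
        · refine Finset.sum_congr rfl fun k _ => ?_
          rw [hright _ (by omega), show i - n + 1 + ((n - 1 + k : ℕ) : ℤ) = i + k by omega]
        · intro k hk
          rw [Finset.mem_range] at hk
          rw [hleft _ (by omega), Fin.val_zero]

lemma Ghat_window_balance (hf : IsConservative f) (hn : 1 ≤ n) (y : ℤ → Option ℤ) (i : ℤ) :
    Ghat n f (window n y i) + (f (window n (fun j => normO (y j)) (i + 1))).val =
      (normO (y i)).val + Ghat n f (window n y (i + 1)) := by
  -- Counting particles needs a bounded configuration; no term depends on sites beyond `i + n`.
  let y' : ℤ → Option ℤ := fun k => if k ≤ i + 1 + n then y k else none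
  have hin {k : ℤ} (hk : k < i + 1 + n) : y' k = y k := if_pos hk.le
  have hout (k : ℤ) (hk : i + 1 + n < k) : y' k = none := if_neg hk.not_ge
  have hwindow : window n y' i = window n y i := window_congr fun k _ hk => hin (by omega)
  have hwindow_succ : window n y' (i + 1) = window n y (i + 1) := window_congr fun k _ hk => hin hk
  have hoccupied :
      window n (fun j => normO (y' j)) (i + 1) = window n (fun j => normO (y j)) (i + 1) :=
    window_congr fun k _ hk => congrArg normO (hin hk)
  have hcut := hf.Ghat_window_add_sum hn (y := y') (i := i) (m := n + 1)
    (fun k hk => hout k (by push_cast at hk; omega))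
  have hcut_succ := hf.Ghat_window_add_sum hn hout
  rw [Finset.sum_range_succ', Finset.sum_range_succ' _ (n + 1)] at hcut
  simp only [Nat.cast_add, Nat.cast_one, Nat.cast_zero, add_zero, ← add_assoc,
    add_right_comm _ _ (1 : ℤ), hin (show i < i + 1 + n by omega), hwindow,
    hoccupied] at hcut
  rw [hwindow_succ] at hcut_succ
  omega

lemma Ghat_window_le (hf : IsConservative f) (hn : 1 ≤ n) (y : ℤ → Option ℤ) (i : ℤ) :
    Ghat n f (window n y i) ≤ ∑ k ∈ Finset.range n, (normO (y (i + k))).val := by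
  let y' : ℤ → Option ℤ := fun k => if k < i + n then y k else none
  have hin {k : ℤ} (hk : k < i + n) : y' k = y k := if_pos hk
  have hout (k : ℤ) (hk : i + (n - 1 : ℕ) < k) : y' k = none := if_neg (by omega)
  have hcut := hf.Ghat_window_add_sum hn hout
  have hwindow : window n y' i = window n y i := window_congr fun k _ hk => hin hk
  rw [Nat.sub_add_cancel hn, hwindow] at hcut
  calc Ghat n f (window n y i)
      ≤ ∑ k ∈ Finset.range n, (normO (y' (i + k))).val := by omega
    _ = ∑ k ∈ Finset.range n, (normO (y (i + k))).val :=
        Finset.sum_congr rfl fun k hk => by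
          rw [hin (by rw [Finset.mem_range] at hk; omega)]

end IsConservative

end Conservation

section LabeledRule

variable {n : ℕ} {f : (Fin n → Fin 2) → Fin 2} {y : ℤ → Option ℤ}

lemma sum_ite_le_eq_sum_range {M : Type*} [AddCommMonoid M] (g : ℕ → M) {l : ℕ} (hl : l < n) :
    (∑ j : Fin n, if (j : ℕ) ≤ l then g j else 0) = ∑ j ∈ Finset.range (l + 1), g j := by
  rw [Fin.sum_univ_eq_sum_range (fun j => if j ≤ l then g j else 0), ← Finset.sum_filter]
  congr 1
  ext j
  simp only [Finset.mem_filter, Finset.mem_range]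
  omega

lemma exists_fhat_window_eq (hn : 1 ≤ n) {i : ℤ}
    (hi : f (window n (fun j => normO (y j)) i) = 1)
    (hle : Ghat n f (window n y i) ≤ ∑ k ∈ Finset.range n, (normO (y (i + k))).val) :
    ∃ l : ℕ, fhat n f (window n y i) = y (i + l) ∧ normO (y (i + l)) = 1 ∧
      ∑ k ∈ Finset.range (l + 1), (normO (y (i + k))).val = Ghat n f (window n y i) := by
  classical
  have hpos : 0 < Ghat n f (window n y i) := Ghat_pos hn hi
  have hsum {l : ℕ} (hl : l < n) := sum_ite_le_eq_sum_range (fun k => (normO (y (i + k))).val) hl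
  have hex : ∃ l < n, (∑ j : Fin n, if (j : ℕ) ≤ l then (normO (window n y i j)).val else 0) =
      Ghat n f (window n y i) := by
    obtain ⟨l, hl, hlsum⟩ := exists_sum_range_succ_eq (fun k => Fin.is_le _) hpos hle
    exact ⟨l, hl, (hsum hl).trans hlsum⟩
  have hfhat : fhat n f (window n y i) = y (i + Nat.find hex) :=
    (if_pos hi).trans (dif_pos hex)
  obtain ⟨hl, hlsum⟩ := Nat.find_spec hex
  have hpartial := (hsum hl).symm.trans hlsum
  refine ⟨Nat.find hex, hfhat, Fin.eq_one_of_ne_zero _ fun hzero => ?_, hpartial⟩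
  refine ne_zero_of_sum_range_succ_eq hpos hpartial (fun m hm heq => ?_) (congrArg Fin.val hzero)
  exact Nat.find_min hex hm ⟨hm.trans hl, (hsum (hm.trans hl)).trans heq⟩

lemma fhat_window_eq_none {i : ℤ} (hi : f (window n (fun j => normO (y j)) i) ≠ 1) :
    fhat n f (window n y i) = none :=
  if_neg hi

lemma IsConservative.normO_fhat_window (hf : IsConservative f) (hn : 1 ≤ n)
    (y : ℤ → Option ℤ) (i : ℤ) :
    normO (fhat n f (window n y i)) = f (window n (fun j => normO (y j)) i) := by
  by_cases hi : f (window n (fun j => normO (y j)) i) = 1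
  · obtain ⟨l, hl, hocc, -⟩ := exists_fhat_window_eq hn hi (hf.Ghat_window_le hn y i)
    rw [hl, hocc, hi]
  · rw [fhat_window_eq_none hi, normO_none]
    by_contra hne
    exact hi (Fin.eq_one_of_ne_zero _ (Ne.symm hne))

lemma IsLabelCount.fhat_window {c : ℤ → ℤ} (hc : IsLabelCount y c) (hf : IsConservative f)
    (hn : 1 ≤ n) :
    IsLabelCount (fun i => fhat n f (window n y i))
      (fun i => c (i - 1) + Ghat n f (window n y i)) where
  step i := by
    have hbalance := hf.Ghat_window_balance hn y (i - 1)
    have hstep := hc.step (i - 1)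
    rw [sub_add_cancel] at hbalance
    rw [hf.normO_fhat_window hn]
    omega
  label i hi := by
    rw [hf.normO_fhat_window hn] at hi
    obtain ⟨l, hl, hocc, hsum⟩ := exists_fhat_window_eq hn hi (hf.Ghat_window_le hn y i)
    rw [hl, hc.label _ hocc, hc.eq_add_sum, hsum]
  not_bddAbove := by
    rintro ⟨b, hb⟩
    refine hc.not_bddAbove ⟨b, ?_⟩
    rintro _ ⟨i, rfl⟩
    have := hb ⟨i + 1, rfl⟩
    simp only [add_sub_cancel_right] at this
    omega
  not_bddBelow := by
    rintro ⟨b, hb⟩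
    refine hc.not_bddBelow ⟨b - n, ?_⟩
    rintro _ ⟨i, rfl⟩
    have := hb ⟨i + 1, rfl⟩
    simp only [add_sub_cancel_right] at this
    have := Ghat_le f (window n y (i + 1))
    omega

end LabeledRule

/-- If `f` is a conservative rule of width `n ≥ 1` and `y` is an increasing
labeling bisequence, then `f̂_∞(y)`, defined by
`f̂_∞(y)ᵢ = f̂(yᵢ, y_{i+1}, …, y_{i+n-1})`, is also an increasing labeling
bisequence. -/
theorem stmt_10 (n : ℕ) (hn : 1 ≤ n) (f : (Fin n → Fin 2) → Fin 2)
    (hf : ∀ L : ℕ, 0 < L → LCons n f L)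
    (y : ℤ → Option ℤ) (hy : IsLabeling y) :
    IsLabeling (fun i : ℤ => fhat n f (fun k => y (i + (k : ℕ)))) := by
  obtain ⟨c, hc⟩ := hy.exists_isLabelCount
  have hcons : IsConservative f := hf
  exact (hc.fhat_window hcons hn).isLabeling
end

section
/- Let f be the local rule of width 4 with code number 49024, and define g : ℤ^4 → ℤ by g(x_0,x_1,x_2,x_3) = x_1 − 1 + Θ(x_3 + x_2 − 2x_1 − 3). Then for every strictly increasing s : ℤ → ℤ, the function t = g_{∞,1}(s) is strictly increasing and φ(t) = f_∞(φ(s)). -/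
/-- For a (strictly increasing) `s : ℤ → ℤ`, `phi s` is the occupancy bisequence:
`phi s i = 1` iff `i` lies in the range of `s`. -/
noncomputable def phi (s : ℤ → ℤ) (i : ℤ) : Fin 2 :=
  haveI := Classical.propDecidable (i ∈ Set.range s)
  if i ∈ Set.range s then 1 else 0

/-- The local rule of width 4 with code number `C`: `f(x₁,x₂,x₃,x₄)` is the
binary digit of `C` at position `8x₁ + 4x₂ + 2x₃ + x₄`. -/
def ruleOfCode (C : ℕ) (x : Fin 4 → Fin 2) : Fin 2 :=
  if C.testBit (8 * (x 0 : ℕ) + 4 * (x 1 : ℕ) + 2 * (x 2 : ℕ) + (x 3 : ℕ)) then 1 else 0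

/-- The step function: `Θ(m) = 1` if `m > 0` and `Θ(m) = 0` otherwise. -/
def theta (m : ℤ) : ℤ := if 0 < m then 1 else 0

/-- The delta function: `δ_{m,n} = 1` if `m = n` and `δ_{m,n} = 0` otherwise. -/
def deltaZ (m k : ℤ) : ℤ := if m = k then 1 else 0

/-!
Consecutive gaps of `s` are at least `1`, so `s (n + 2) + s (n + 1) - 2 * s n ≥ 3`, with equality
exactly when `s n`, `s n + 1`, `s n + 2` are all occupied. Hence `g` moves a particle one cell to
the left when it heads a block of three occupied cells and leaves it fixed otherwise. Two particles
could only collide if a fixed one were immediately followed by a moving one, but then the first of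
them would head a block of three as well. On the other side, `49024` encodes the rule
`(x₁ ∧ ¬ (x₂ ∧ x₃)) ∨ (x₂ ∧ x₃ ∧ x₄)`: a cell is occupied afterwards iff its particle stays or the
particle one cell to its right arrives.
-/

/-- The image `g_{∞,1}(s)` of a bisequence of particle positions under the particle mapping `g`,
which does not depend on its first argument `s (n - 1)`. -/
def particleMap (s : ℤ → ℤ) (n : ℤ) : ℤ :=
  s n - 1 + theta (s (n + 2) + s (n + 1) - 2 * s n - 3)

/-- The particle `n` is the leftmost of three particles occupying adjacent cells. This is the
condition under which `particleMap` moves it. -/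
def HeadsTriple (s : ℤ → ℤ) (n : ℤ) : Prop :=
  s (n + 1) = s n + 1 ∧ s (n + 2) = s n + 2

theorem add_one_mem_range_iff_of_strictMono {α β : Type*} [LinearOrder α] [Add α] [One α]
    [SuccAddOrder α] [NoMaxOrder α] [PartialOrder β] [Add β] [One β] [SuccAddOrder β] {f : α → β}
    (hf : StrictMono f) (a : α) : f a + 1 ∈ Set.range f ↔ f (a + 1) = f a + 1 := by
  refine ⟨?_, fun h => ⟨a + 1, h⟩⟩
  rintro ⟨b, hb⟩
  have hlt : f a < f (a + 1) := hf (Order.add_one_le_iff.mp le_rfl)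
  have hab : a < b :=
    hf.lt_iff_lt.mp ((Order.add_one_le_iff_of_not_isMax hlt.not_isMax).mp hb.ge)
  exact le_antisymm (hb ▸ hf.monotone (Order.add_one_le_of_lt hab)) (Order.add_one_le_of_lt hlt)

theorem ruleOfCode_49024_eq_one_iff (x : Fin 4 → Fin 2) :
    ruleOfCode 49024 x = 1 ↔
      (x 0 = 1 ∧ ¬(x 1 = 1 ∧ x 2 = 1)) ∨ (x 1 = 1 ∧ x 2 = 1 ∧ x 3 = 1) := by
  revert x
  decide

theorem phi_eq_one_iff (s : ℤ → ℤ) (i : ℤ) : phi s i = 1 ↔ i ∈ Set.range s := by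
  simp [phi]

theorem phi_eq_ruleOfCode_49024_iff (s t : ℤ → ℤ) (i : ℤ) :
    phi t i = ruleOfCode 49024 (fun k : Fin 4 => phi s (i + (k : ℕ))) ↔
      (i ∈ Set.range t ↔
        (i ∈ Set.range s ∧ ¬(i + 1 ∈ Set.range s ∧ i + 2 ∈ Set.range s)) ∨
          (i + 1 ∈ Set.range s ∧ i + 2 ∈ Set.range s ∧ i + 3 ∈ Set.range s)) := by
  have fin_two_ext : ∀ a b : Fin 2, a = b ↔ (a = 1 ↔ b = 1) := by decide
  rw [fin_two_ext, ruleOfCode_49024_eq_one_iff]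
  simp [phi_eq_one_iff, -Set.mem_range]

theorem headsTriple_iff_mem_range {s : ℤ → ℤ} (hs : StrictMono s) (n : ℤ) :
    HeadsTriple s n ↔ s n + 1 ∈ Set.range s ∧ s n + 2 ∈ Set.range s := by
  rw [add_one_mem_range_iff_of_strictMono hs]
  refine and_congr_right fun h => ?_
  have hnext := add_one_mem_range_iff_of_strictMono hs (n + 1)
  rwa [h, add_assoc, add_assoc, one_add_one_eq_two, iff_comm] at hnext

theorem HeadsTriple.particleMap_eq {s : ℤ → ℤ} {n : ℤ} (h : HeadsTriple s n) :
    particleMap s n = s n - 1 := by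
  obtain ⟨h₁, h₂⟩ := h
  have hgap : ¬0 < s (n + 2) + s (n + 1) - 2 * s n - 3 := by omega
  rw [particleMap, theta, if_neg hgap, add_zero]

theorem particleMap_eq_of_not_headsTriple {s : ℤ → ℤ} (hs : StrictMono s) {n : ℤ}
    (h : ¬HeadsTriple s n) : particleMap s n = s n := by
  have h₁ : s n < s (n + 1) := hs (by omega)
  have h₂ : s (n + 1) < s (n + 2) := hs (by omega)
  have hgap : 0 < s (n + 2) + s (n + 1) - 2 * s n - 3 := by
    unfold HeadsTriple at h
    omega
  rw [particleMap, theta, if_pos hgap, sub_add_cancel]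

theorem HeadsTriple.of_add_one {s : ℤ → ℤ} {n : ℤ} (h : HeadsTriple s (n + 1))
    (hn : s (n + 1) = s n + 1) : HeadsTriple s n := by
  have hnext : s (n + 2) = s (n + 1) + 1 := by simpa [add_assoc] using h.1
  exact ⟨hn, by omega⟩

theorem strictMono_particleMap {s : ℤ → ℤ} (hs : StrictMono s) : StrictMono (particleMap s) := by
  refine strictMono_int_of_lt_succ fun n => ?_
  have hlt : s n < s (n + 1) := hs (lt_add_one n)
  by_cases hn : HeadsTriple s n <;> by_cases hn' : HeadsTriple s (n + 1)
  · rw [hn.particleMap_eq, hn'.particleMap_eq]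
    omega
  · rw [hn.particleMap_eq, particleMap_eq_of_not_headsTriple hs hn']
    omega
  · have hgap : s (n + 1) ≠ s n + 1 := mt (hn'.of_add_one) hn
    rw [particleMap_eq_of_not_headsTriple hs hn, hn'.particleMap_eq]
    omega
  · rwa [particleMap_eq_of_not_headsTriple hs hn, particleMap_eq_of_not_headsTriple hs hn']

theorem mem_range_particleMap_iff {s : ℤ → ℤ} (hs : StrictMono s) (i : ℤ) :
    i ∈ Set.range (particleMap s) ↔
      (i ∈ Set.range s ∧ ¬(i + 1 ∈ Set.range s ∧ i + 2 ∈ Set.range s)) ∨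
        (i + 1 ∈ Set.range s ∧ i + 2 ∈ Set.range s ∧ i + 3 ∈ Set.range s) := by
  constructor
  · rintro ⟨n, rfl⟩
    by_cases h : HeadsTriple s n
    · rw [h.particleMap_eq]
      exact Or.inr ⟨⟨n, by omega⟩, ⟨n + 1, by linarith [h.1]⟩, ⟨n + 2, by linarith [h.2]⟩⟩
    · rw [particleMap_eq_of_not_headsTriple hs h]
      exact Or.inl ⟨⟨n, rfl⟩, mt (headsTriple_iff_mem_range hs n).mpr h⟩
  · rintro (⟨⟨n, rfl⟩, hstay⟩ | ⟨⟨n, hn⟩, h₁, h₂⟩)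
    · exact ⟨n, particleMap_eq_of_not_headsTriple hs (mt (headsTriple_iff_mem_range hs n).mp hstay)⟩
    · obtain rfl : i = s n - 1 := by omega
      have h : HeadsTriple s n := (headsTriple_iff_mem_range hs n).mpr
        ⟨by convert h₁ using 1; ring, by convert h₂ using 1; ring⟩
      exact ⟨n, h.particleMap_eq⟩

/-- For the conservative 4-input rule with code number 49024 and the particle
mapping `g(x₀,x₁,x₂,x₃) = x₁ - 1 + Θ(x₃ + x₂ - 2x₁ - 3)`: for every strictly increasing `s : ℤ → ℤ`,
the bisequence `t = g_{∞,1}(s)`, `t i = g (s (i-1)) (s i) (s (i+1)) (s (i+2))`,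
is strictly increasing and `φ(t) = f_∞(φ(s))`. -/
theorem stmt_13 (s : ℤ → ℤ) (hs : StrictMono s) :
    StrictMono (fun i : ℤ => s i - 1 + theta (s (i + 2) + s (i + 1) - 2 * s i - 3)) ∧
    ∀ i : ℤ,
      phi (fun i : ℤ => s i - 1 + theta (s (i + 2) + s (i + 1) - 2 * s i - 3)) i =
        ruleOfCode 49024 (fun k : Fin 4 => phi s (i + (k : ℕ))) :=
  ⟨strictMono_particleMap hs, fun i =>
    (phi_eq_ruleOfCode_49024_iff s _ i).mpr (mem_range_particleMap_iff hs i)⟩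
end
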